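/- arXiv:2303.10675 — 2 statements merged into one kernel-verified Lean document; each statement's English description precedes it below -/
import Mathlib

section
/- The Bellman operator T is an α-contraction in the supremum norm: for all J, J' : X → ℝ, max_{i∈X} |(TJ)(i) − (TJ')(i)| ≤ α · max_{j∈X} |J(j) − J'(j)|. -/
open Finset Filter Topology

theorem stmt10
    {n : ℕ} (hn : 0 < n)
    {A : Type*}
    (α : ℝ) (hα0 : 0 ≤ α) (hα1 : α < 1)
    (U : Fin n → Finset A) (hU : ∀ i, (U i).Nonempty)
    (p : Fin n → A → Fin n → ℝ) (g : Fin n → A → Fin n → ℝ)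
    (hp0 : ∀ i, ∀ u ∈ U i, ∀ j, 0 ≤ p i u j)
    (hp1 : ∀ i, ∀ u ∈ U i, ∑ j, p i u j = 1)
    (T : (Fin n → ℝ) → (Fin n → ℝ))
    (hT : ∀ (J : Fin n → ℝ) (i : Fin n),
      T J i = (U i).inf' (hU i) (fun u => ∑ j, p i u j * (g i u j + α * J j)))
    :
    ∀ J J' : Fin n → ℝ,
      Finset.univ.sup' (Finset.univ_nonempty_iff.mpr ⟨⟨0, hn⟩⟩ : (Finset.univ : Finset (Fin n)).Nonempty) (fun i => |T J i - T J' i|) ≤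
        α * Finset.univ.sup' (Finset.univ_nonempty_iff.mpr ⟨⟨0, hn⟩⟩ : (Finset.univ : Finset (Fin n)).Nonempty) (fun j => |J j - J' j|) := by
  intro J J'
  set M := Finset.univ.sup' (Finset.univ_nonempty_iff.mpr ⟨⟨0, hn⟩⟩ : (Finset.univ : Finset (Fin n)).Nonempty) (fun j => |J j - J' j|) with hM
  have hle : ∀ j, |J j - J' j| ≤ M := fun j =>
    Finset.le_sup' (fun j => |J j - J' j|) (Finset.mem_univ j)
  clear_value M
  have key : ∀ K K' : Fin n → ℝ, (∀ j, K j - K' j ≤ M) → ∀ i, T K i - T K' i ≤ α * M := by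
    intro K K' h i
    obtain ⟨u, hu, hu'⟩ := Finset.exists_mem_eq_inf' (hU i)
      (fun u => ∑ j, p i u j * (g i u j + α * K' j))
    have h1 : T K i ≤ ∑ j, p i u j * (g i u j + α * K j) := by
      rw [hT]
      exact Finset.inf'_le (fun u => ∑ j, p i u j * (g i u j + α * K j)) hu
    have h2 : T K' i = ∑ j, p i u j * (g i u j + α * K' j) := by
      rw [hT, hu']
    have h3 : ∑ j, p i u j * (g i u j + α * K j)
        ≤ ∑ j, (p i u j * (g i u j + α * K' j) + p i u j * (α * M)) := by
      apply Finset.sum_le_sum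
      intro j _
      have h4 := mul_le_mul_of_nonneg_left
        (mul_le_mul_of_nonneg_left (h j) hα0) (hp0 i u hu j)
      linarith
    rw [Finset.sum_add_distrib, ← Finset.sum_mul, hp1 i u hu] at h3
    linarith
  apply Finset.sup'_le
  intro i _
  rw [abs_sub_le_iff]
  exact ⟨key J J' (fun j => (abs_sub_le_iff.mp (hle j)).1) i,
    key J' J (fun j => (abs_sub_le_iff.mp (hle j)).2) i⟩
end

section
/- There exists a unique function J* : X → ℝ satisfying the Bellman equation J*(i) = min_{u∈U(i)} Σ_{j∈X} p(i,u,j)·(g(i,u,j) + α·J*(j)) for all i ∈ X; moreover, for any initial J_0 : X → ℝ the value iteration sequence J_{k+1} = T J_k converges to J* pointwise. -/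
open Finset Filter Topology

theorem stmt12
    {n : ℕ} (hn : 0 < n)
    {A : Type*}
    (α : ℝ) (hα0 : 0 ≤ α) (hα1 : α < 1)
    (U : Fin n → Finset A) (hU : ∀ i, (U i).Nonempty)
    (p : Fin n → A → Fin n → ℝ) (g : Fin n → A → Fin n → ℝ)
    (hp0 : ∀ i, ∀ u ∈ U i, ∀ j, 0 ≤ p i u j)
    (hp1 : ∀ i, ∀ u ∈ U i, ∑ j, p i u j = 1)
    (T : (Fin n → ℝ) → (Fin n → ℝ))
    (hT : ∀ (J : Fin n → ℝ) (i : Fin n),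
      T J i = (U i).inf' (hU i) (fun u => ∑ j, p i u j * (g i u j + α * J j)))
    :
    ∃ Jstar : Fin n → ℝ,
      (∀ i, Jstar i = T Jstar i) ∧
      (∀ J' : Fin n → ℝ, (∀ i, J' i = T J' i) → J' = Jstar) ∧
      (∀ Jseq : ℕ → Fin n → ℝ, (∀ k, Jseq (k + 1) = T (Jseq k)) →
        ∀ i, Tendsto (fun k => Jseq k i) atTop (𝓝 (Jstar i))) := by
  have key : ∀ (J J' : Fin n → ℝ) (i : Fin n), T J i ≤ T J' i + α * dist J J' := by
    intro J J' i
    rw [hT J i, hT J' i]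
    obtain ⟨u, hu, hue⟩ := Finset.exists_mem_eq_inf' (hU i)
      (fun u => ∑ j, p i u j * (g i u j + α * J' j))
    rw [hue]
    refine (Finset.inf'_le _ hu).trans ?_
    have h1 : α * dist J J' = ∑ j, p i u j * (α * dist J J') := by
      rw [← Finset.sum_mul, hp1 i u hu, one_mul]
    rw [h1, ← Finset.sum_add_distrib]
    refine Finset.sum_le_sum fun j _ => ?_
    rw [← mul_add]
    refine mul_le_mul_of_nonneg_left ?_ (hp0 i u hu j)
    have h2 : J j - J' j ≤ dist J J' :=
      (le_abs_self _).trans ((Real.dist_eq _ _).symm.le.trans (dist_le_pi_dist J J' j))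
    nlinarith [mul_le_mul_of_nonneg_left h2 hα0]
  have hc : ContractingWith ⟨α, hα0⟩ T := by
    refine ⟨by exact_mod_cast hα1, LipschitzWith.of_dist_le_mul fun J J' => ?_⟩
    change dist (T J) (T J') ≤ α * dist J J'
    refine (dist_pi_le_iff (mul_nonneg hα0 dist_nonneg)).2 fun i => ?_
    rw [Real.dist_eq, abs_le]
    have h1 := key J J' i
    have h2 := key J' J i
    rw [dist_comm J' J] at h2
    constructor <;> linarith
  refine ⟨ContractingWith.fixedPoint T hc, fun i => ?_, fun J' h => ?_, fun Jseq h i => ?_⟩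
  · exact (congrFun hc.fixedPoint_isFixedPt i).symm
  · exact hc.fixedPoint_unique (funext fun i => (h i).symm)
  · have hs : ∀ k, Jseq k = T^[k] (Jseq 0) := by
      intro k
      induction k with
      | zero => rfl
      | succ k ih => rw [h, Function.iterate_succ_apply', ← ih]
    have ht := hc.tendsto_iterate_fixedPoint (Jseq 0)
    simp only [← hs] at ht
    exact (tendsto_pi_nhds.1 ht) i
end
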